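/- Let α ∈ (0,1/2). There exists δ ∈ (0,1), depending only on α, with the following property: for every x = (x1,x2) in the closure of D⁺ with x2 ≤ δ and every measurable ω : ℝ×(0,∞) → ℝ which is odd in x1 and satisfies χ_{A(x)} ≤ ω ≤ 1 on D⁺, one has ∫_{(x1,∞)×(0,∞)} K2(x,y) ω(y) dy ≥ (1/(5·8^α·α))·x2^{1−2α}. -/

import Mathlib

open MeasureTheory

noncomputable section

/-- Euclidean distance between points of `ℝ²` written as pairs. -/
def edist2 (p q : ℝ × ℝ) : ℝ := Real.sqrt ((p.1 - q.1) ^ 2 + (p.2 - q.2) ^ 2)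

/-- The open quadrant `D⁺ = (0,∞) × (0,∞)`. -/
def Dplus : Set (ℝ × ℝ) := Set.Ioi 0 ×ˢ Set.Ioi 0

/-- `K1(x,y) = (y₂-x₂)/|x-y|^{2+2α} - (y₂-x₂)/|x-ỹ|^{2+2α}
  - (y₂+x₂)/|x+y|^{2+2α} + (y₂+x₂)/|x-ȳ|^{2+2α}`, where `ỹ = (-y₁,y₂)`, `ȳ = (y₁,-y₂)`. -/
def K1 (α : ℝ) (x y : ℝ × ℝ) : ℝ :=
  (y.2 - x.2) / edist2 x y ^ (2 + 2 * α)
  - (y.2 - x.2) / edist2 x (-y.1, y.2) ^ (2 + 2 * α)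
  - (y.2 + x.2) / edist2 x (-y.1, -y.2) ^ (2 + 2 * α)
  + (y.2 + x.2) / edist2 x (y.1, -y.2) ^ (2 + 2 * α)

/-- `K2(x,y) = (y₁-x₁)/|x-y|^{2+2α} + (y₁+x₁)/|x-ỹ|^{2+2α}
  - (y₁+x₁)/|x+y|^{2+2α} - (y₁-x₁)/|x-ȳ|^{2+2α}`, where `ỹ = (-y₁,y₂)`, `ȳ = (y₁,-y₂)`. -/
def K2 (α : ℝ) (x y : ℝ × ℝ) : ℝ :=
  (y.1 - x.1) / edist2 x y ^ (2 + 2 * α)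
  + (y.1 + x.1) / edist2 x (-y.1, y.2) ^ (2 + 2 * α)
  - (y.1 + x.1) / edist2 x (-y.1, -y.2) ^ (2 + 2 * α)
  - (y.1 - x.1) / edist2 x (y.1, -y.2) ^ (2 + 2 * α)

/-- The triangle `A(x) = {y : x₁ < y₁ < x₁+1, x₂ < y₂ < x₂ + (y₁ - x₁)}`. -/
def Atri (x : ℝ × ℝ) : Set (ℝ × ℝ) :=
  {y : ℝ × ℝ | x.1 < y.1 ∧ y.1 < x.1 + 1 ∧ x.2 < y.2 ∧ y.2 < x.2 + (y.1 - x.1)}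

/-!
Pairing each point with its reflection across the horizontal axis writes `K2` as a sum of two
half-plane kernels, at horizontal offsets `y₁ - x₁` and `y₁ + x₁`. Both are nonnegative on the
domain of integration, so the integral is at least that of the first kernel over `A(x)`. There the
horizontal integral is explicit; with `h = x₂` and `y₂ = h + t` it is, up to `O(h)`, at least
`2^{-α} (t^{-2α} - (t + h)^{-2α}) / (2α)`, whose integral over `0 < t < 1` is at least
`2^{-α} h^{1-2α} / (2α)` up to `O(h)`. Since `h = o(h^{1-2α})`, the error terms are harmless for
small `h`.
-/

open Set Filter Topology

section Rpow

variable {α r c : ℝ}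

lemma exists_forall_Icc_rpow_le {p ε : ℝ} (hp : 0 < p) (hε : 0 < ε) :
    ∃ δ ∈ Ioo (0 : ℝ) 1, ∀ t ∈ Icc 0 δ, t ^ p ≤ ε := by
  refine ⟨min (1 / 2) (ε ^ p⁻¹), ⟨lt_min one_half_pos (Real.rpow_pos_of_pos hε _),
    min_lt_of_left_lt one_half_lt_one⟩, fun t ht => ?_⟩
  exact (Real.le_rpow_inv_iff_of_pos ht.1 hε.le hp).1 (ht.2.trans (min_le_right _ _))

lemma two_mul_sq_rpow_neg {t : ℝ} (ht : 0 ≤ t) :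
    (2 * t ^ 2) ^ (-α) = 2 ^ (-α) * t ^ (-(2 * α)) := by
  rw [Real.mul_rpow zero_le_two (sq_nonneg t), ← Real.rpow_natCast_mul ht]
  congr 2
  push_cast
  ring

lemma sq_rpow_neg (t : ℝ) : (t ^ 2) ^ (-α) = |t| ^ (-(2 * α)) := by
  rw [← sq_abs, ← Real.rpow_natCast_mul (abs_nonneg t)]
  congr 1
  push_cast
  ring

lemma rpow_neg_sub_rpow_neg_le {p q : ℝ} (hα₀ : 0 ≤ α) (hα₁ : α ≤ 1) (hp : 1 ≤ p) (hpq : p ≤ q) :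
    p ^ (-α) - q ^ (-α) ≤ 1 - p / q := by
  have hp₀ : 0 < p := by linarith
  have hq₀ : 0 < q := by linarith
  have hratio : p / q ≤ 1 := (div_le_one hq₀).2 hpq
  have hfactor : q ^ (-α) = p ^ (-α) * (p / q) ^ α := by
    rw [Real.div_rpow hp₀.le hq₀.le, Real.rpow_neg hp₀.le, Real.rpow_neg hq₀.le]
    field_simp
  calc p ^ (-α) - q ^ (-α) = p ^ (-α) * (1 - (p / q) ^ α) := by rw [hfactor]; ring
    _ ≤ 1 * (1 - (p / q) ^ α) :=
      mul_le_mul_of_nonneg_right (Real.rpow_le_one_of_one_le_of_nonpos hp (by linarith))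
        (sub_nonneg.2 (Real.rpow_le_one (by positivity) hratio hα₀))
    _ ≤ 1 - p / q := by
      rw [one_mul]
      gcongr
      simpa only [Real.rpow_one] using Real.rpow_le_rpow_of_exponent_ge (by positivity) hratio hα₁

lemma one_add_sq_rpow_neg_sub_le {s t : ℝ} (hα₀ : 0 ≤ α) (hα₁ : α ≤ 1) (hs : 0 ≤ s)
    (hst : s ≤ t) : (1 + s ^ 2) ^ (-α) - (1 + t ^ 2) ^ (-α) ≤ t - s := by
  refine (rpow_neg_sub_rpow_neg_le hα₀ hα₁ (by nlinarith) (by gcongr)).trans ?_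
  rw [one_sub_div (by positivity), div_le_iff₀ (by positivity)]
  have hmean : s + t ≤ 1 + t ^ 2 := by nlinarith [sq_nonneg (t - 1)]
  calc 1 + t ^ 2 - (1 + s ^ 2) = (t - s) * (s + t) := by ring
    _ ≤ (t - s) * (1 + t ^ 2) := mul_le_mul_of_nonneg_left hmean (sub_nonneg.2 hst)

lemma intervalIntegrable_add_rpow (hr : -1 < r) (a b c : ℝ) :
    IntervalIntegrable (fun t => (t + c) ^ r) volume a b := by
  simpa using (intervalIntegral.intervalIntegrable_rpow' (a := a + c) (b := b + c)
    hr).comp_add_right c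

lemma intervalIntegrable_rpow_sub_add_rpow (hr : -1 < r) (a b c : ℝ) :
    IntervalIntegrable (fun t => t ^ r - (t + c) ^ r) volume a b :=
  (intervalIntegral.intervalIntegrable_rpow' hr).sub (intervalIntegrable_add_rpow hr a b c)

lemma integral_rpow_sub_add_rpow (hr : -1 < r) (b c : ℝ) :
    ∫ t in 0..b, (t ^ r - (t + c) ^ r) =
      (b ^ (r + 1) - (b + c) ^ (r + 1) + c ^ (r + 1)) / (r + 1) := by
  rw [intervalIntegral.integral_sub (intervalIntegral.intervalIntegrable_rpow' hr)
      (intervalIntegrable_add_rpow hr 0 b c),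
    intervalIntegral.integral_comp_add_right (fun t => t ^ r), integral_rpow (Or.inl hr),
    integral_rpow (Or.inl hr), Real.zero_rpow (by linarith), zero_add]
  ring

lemma integrableOn_rpow_sub_add_rpow_Ioi (hr : -1 < r) (hr₀ : r ≤ 0) (hc : 0 ≤ c) :
    IntegrableOn (fun t => t ^ r - (t + c) ^ r) (Ioi 0) := by
  refine integrableOn_Ioi_of_intervalIntegral_norm_bounded (c ^ (r + 1) / (r + 1)) 0
    (fun b => (intervalIntegrable_rpow_sub_add_rpow hr 0 b c).1) tendsto_id ?_
  filter_upwards [eventually_ge_atTop 0] with b hb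
  have hnorm : ∫ t in 0..b, ‖t ^ r - (t + c) ^ r‖ = ∫ t in 0..b, (t ^ r - (t + c) ^ r) :=
    intervalIntegral.integral_congr_Ioo_of_le hb fun t ht => Real.norm_of_nonneg <|
      sub_nonneg.2 (Real.rpow_le_rpow_of_nonpos ht.1 (by linarith) hr₀)
  rw [hnorm, integral_rpow_sub_add_rpow hr]
  have hr₁ : 0 < r + 1 := by linarith
  have hmono : b ^ (r + 1) ≤ (b + c) ^ (r + 1) := by gcongr; linarith
  gcongr
  linarith

lemma integrableOn_abs_sub_rpow_sub_abs_add_rpow (hr : -1 < r) (hr₀ : r ≤ 0) (hc : 0 ≤ c) :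
    IntegrableOn (fun t => |t - c| ^ r - |t + c| ^ r) (Ioi 0) := by
  rw [← Ioc_union_Ioi_eq_Ioi hc]
  refine IntegrableOn.union ?_ ?_
  · have hreflect : IntervalIntegrable (fun t => (c - t) ^ r) volume 0 c := by
      simpa using ((intervalIntegral.intervalIntegrable_rpow' (a := 0) (b := c)
        hr).comp_sub_left c).symm
    refine ((intervalIntegrable_iff_integrableOn_Ioc_of_le hc).1
      (hreflect.sub (intervalIntegrable_add_rpow hr 0 c c))).congr_fun (fun t ht => ?_)
      measurableSet_Ioc
    simp only
    rw [abs_of_nonpos (sub_nonpos.2 ht.2), abs_of_pos (add_pos_of_pos_of_nonneg ht.1 hc), neg_sub]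
  · have hshift := (measurePreserving_sub_right volume c).integrableOn_comp_preimage
      (measurableEmbedding_subRight c) |>.2
      (integrableOn_rpow_sub_add_rpow_Ioi hr hr₀ (c := 2 * c) (by positivity))
    simp only [preimage_sub_const_Ioi, zero_add] at hshift
    refine hshift.congr_fun (fun t (ht : c < t) => ?_) measurableSet_Ioi
    simp only [Function.comp_apply]
    rw [abs_of_pos (sub_pos.2 ht), abs_of_pos (by linarith)]
    ring_nf

lemma sub_le_integral_rpow_sub_add_rpow (hr : -1 < r) (hr₀ : r ≤ 0) (hc : 0 ≤ c) :
    c ^ (r + 1) - c ≤ ∫ t in 0..1, (t ^ r - (t + c) ^ r) := by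
  have hr₁ : 0 < r + 1 := by linarith
  have hbernoulli : (1 + c) ^ (r + 1) ≤ 1 + (r + 1) * c :=
    rpow_one_add_le_one_add_mul_self (by linarith) hr₁.le (by linarith)
  have hpow : 0 ≤ c ^ (r + 1) := by positivity
  rw [integral_rpow_sub_add_rpow hr, Real.one_rpow, le_div_iff₀ hr₁]
  nlinarith

end Rpow

section HorizontalIntegral

variable {α a c : ℝ}

lemma hasDerivAt_sq_add_rpow_neg {u : ℝ} (hα : α ≠ 0) (hpos : 0 < u ^ 2 + c) :
    HasDerivAt (fun t => -(t ^ 2 + c) ^ (-α) / (2 * α)) (u / (u ^ 2 + c) ^ (1 + α)) u := by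
  have hsq : HasDerivAt (fun t : ℝ => t ^ 2 + c) (2 * u) u := by
    simpa using (hasDerivAt_pow 2 u).add_const c
  refine ((hsq.rpow_const (p := -α) (Or.inl hpos.ne')).neg.div_const (2 * α)).congr_deriv ?_
  rw [show -α - 1 = -(1 + α) by ring, Real.rpow_neg hpos.le]
  field_simp

lemma tendsto_sq_add_rpow_neg_atTop (hα : 0 < α) (c : ℝ) :
    Tendsto (fun t : ℝ => -(t ^ 2 + c) ^ (-α) / (2 * α)) atTop (𝓝 0) := by
  have hsq : Tendsto (fun t : ℝ => t ^ 2 + c) atTop atTop :=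
    tendsto_atTop_add_const_right _ _ (tendsto_pow_atTop two_ne_zero)
  simpa using ((tendsto_rpow_neg_atTop hα).comp hsq).neg.div_const (2 * α)

lemma sq_add_pos_of_le {u : ℝ} (ha : 0 ≤ a) (hc : 0 < a ^ 2 + c) (hu : a ≤ u) :
    0 < u ^ 2 + c := by
  nlinarith

lemma div_sq_add_rpow_nonneg {u : ℝ} (ha : 0 ≤ a) (hc : 0 < a ^ 2 + c) (hu : a ≤ u) :
    0 ≤ u / (u ^ 2 + c) ^ (1 + α) :=
  div_nonneg (ha.trans hu) (Real.rpow_nonneg (sq_add_pos_of_le ha hc hu).le _)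

lemma integrableOn_div_sq_add_rpow_Ioi (hα : 0 < α) (ha : 0 ≤ a) (hc : 0 < a ^ 2 + c) :
    IntegrableOn (fun u => u / (u ^ 2 + c) ^ (1 + α)) (Ioi a) :=
  integrableOn_Ioi_deriv_of_nonneg'
    (fun _ hu => hasDerivAt_sq_add_rpow_neg hα.ne' (sq_add_pos_of_le ha hc hu))
    (fun _ hu => div_sq_add_rpow_nonneg ha hc (le_of_lt hu)) (tendsto_sq_add_rpow_neg_atTop hα c)

lemma integral_div_sq_add_rpow_Ioi (hα : 0 < α) (ha : 0 ≤ a) (hc : 0 < a ^ 2 + c) :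
    ∫ u in Ioi a, u / (u ^ 2 + c) ^ (1 + α) = (a ^ 2 + c) ^ (-α) / (2 * α) := by
  rw [integral_Ioi_of_hasDerivAt_of_nonneg'
    (fun _ hu => hasDerivAt_sq_add_rpow_neg hα.ne' (sq_add_pos_of_le ha hc hu))
    (fun _ hu => div_sq_add_rpow_nonneg ha hc (le_of_lt hu)) (tendsto_sq_add_rpow_neg_atTop hα c)]
  ring

end HorizontalIntegral

section Sections

variable {X Y E : Type*} [MeasurableSpace X] [MeasurableSpace Y] [NormedAddCommGroup E]
  [NormedSpace ℝ E] {μ : Measure X} {ν : Measure Y} {s : Set (X × Y)} {f : X × Y → E}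

lemma integral_indicator_section (hs : MeasurableSet s) (f : X × Y → E) (y : Y) :
    ∫ x, s.indicator f (x, y) ∂μ = ∫ x in (·, y) ⁻¹' s, f (x, y) ∂μ := by
  rw [← integral_indicator (measurable_prodMk_right hs)]
  rfl

lemma integrable_setIntegral_section [SFinite μ] [SFinite ν] (hs : MeasurableSet s)
    (hf : IntegrableOn f s (μ.prod ν)) :
    Integrable (fun y => ∫ x in (·, y) ⁻¹' s, f (x, y) ∂μ) ν := by
  simpa only [integral_indicator_section hs] using
    (hf.integrable_indicator hs).integral_prod_right

lemma setIntegral_prod_eq_integral_section [SFinite μ] [SFinite ν] (hs : MeasurableSet s)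
    (hf : IntegrableOn f s (μ.prod ν)) :
    ∫ z in s, f z ∂(μ.prod ν) = ∫ y, ∫ x in (·, y) ⁻¹' s, f (x, y) ∂μ ∂ν := by
  rw [← integral_indicator hs, integral_prod_symm _ (hf.integrable_indicator hs)]
  simp only [integral_indicator_section hs]

end Sections

section Triangle

variable {E : Type*} [NormedAddCommGroup E] {f : ℝ × ℝ → E}

lemma measurableSet_Atri (x : ℝ × ℝ) : MeasurableSet (Atri x) := by
  unfold Atri
  measurability

lemma Atri_subset {x : ℝ × ℝ} (hx : 0 ≤ x.2) : Atri x ⊆ Ioi x.1 ×ˢ Ioi 0 :=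
  fun _ hy => ⟨hy.1, hx.trans_lt hy.2.2.1⟩

lemma preimage_add_left_Atri (x : ℝ × ℝ) : (x + ·) ⁻¹' Atri x = Atri 0 := by
  ext p
  simp [Atri]

lemma integrableOn_Atri_zero_iff (x : ℝ × ℝ) :
    IntegrableOn (fun p => f (x + p)) (Atri 0) ↔ IntegrableOn f (Atri x) := by
  rw [← preimage_add_left_Atri x]
  exact (measurePreserving_add_left volume x).integrableOn_comp_preimage
    (measurableEmbedding_addLeft x)

variable [NormedSpace ℝ E]

lemma setIntegral_Atri_eq (x : ℝ × ℝ) (f : ℝ × ℝ → E) :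
    ∫ y in Atri x, f y = ∫ p in Atri 0, f (x + p) := by
  rw [← preimage_add_left_Atri x]
  exact ((measurePreserving_add_left volume x).setIntegral_preimage_emb
    (measurableEmbedding_addLeft x) f _).symm

lemma setIntegral_section_Atri_zero (f : ℝ × ℝ → E) (t : ℝ) :
    ∫ s in (·, t) ⁻¹' Atri 0, f (s, t) =
      (Ioo 0 1).indicator (fun t => ∫ s in t..1, f (s, t)) t := by
  by_cases ht : t ∈ Ioo 0 1
  · have hsection : (·, t) ⁻¹' Atri 0 = Ioo t 1 := by
      ext s
      simp only [Atri, mem_preimage, mem_ofPred_eq, mem_Ioo, Prod.fst_zero, Prod.snd_zero]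
      grind
    rw [indicator_of_mem ht, hsection, intervalIntegral.integral_of_le ht.2.le,
      integral_Ioc_eq_integral_Ioo]
  · have hsection : (·, t) ⁻¹' Atri 0 = (∅ : Set ℝ) := by
      ext s
      simp only [Atri, mem_preimage, mem_ofPred_eq, Prod.fst_zero, Prod.snd_zero]
      grind
    rw [indicator_of_notMem ht, hsection, setIntegral_empty]

lemma intervalIntegrable_integral_of_integrableOn_Atri_zero (hf : IntegrableOn f (Atri 0)) :
    IntervalIntegrable (fun t => ∫ s in t..1, f (s, t)) volume 0 1 := by
  rw [intervalIntegrable_iff_integrableOn_Ioo_of_le zero_le_one,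
    ← integrable_indicator_iff measurableSet_Ioo]
  simpa only [setIntegral_section_Atri_zero] using
    integrable_setIntegral_section (measurableSet_Atri 0) hf

lemma setIntegral_Atri_zero (hf : IntegrableOn f (Atri 0)) :
    ∫ p in Atri 0, f p = ∫ t in 0..1, ∫ s in t..1, f (s, t) := by
  rw [Measure.volume_eq_prod, setIntegral_prod_eq_integral_section (measurableSet_Atri 0) hf]
  simp only [setIntegral_section_Atri_zero]
  rw [integral_indicator measurableSet_Ioo, intervalIntegral.integral_of_le zero_le_one,
    integral_Ioc_eq_integral_Ioo]

end Triangle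

/-- The horizontal kernel of the upper half-plane: the contributions to `K2` of a point at height
`w` and of its reflection across the horizontal axis, at horizontal offset `u` from an evaluation
point at height `h`. -/
def halfPlaneKernel (α h u w : ℝ) : ℝ :=
  u / (u ^ 2 + (w - h) ^ 2) ^ (1 + α) - u / (u ^ 2 + (w + h) ^ 2) ^ (1 + α)

section HalfPlaneKernel

variable {α h : ℝ}

lemma halfPlaneKernel_nonneg {u w : ℝ} (hα : -1 ≤ α) (hh : 0 ≤ h) (hu : 0 < u) (hw : 0 ≤ w) :
    0 ≤ halfPlaneKernel α h u w := by
  have hdist : u ^ 2 + (w - h) ^ 2 ≤ u ^ 2 + (w + h) ^ 2 := by nlinarith [mul_nonneg hw hh]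
  refine sub_nonneg.2 (div_le_div_of_nonneg_left hu.le (by positivity) ?_)
  exact Real.rpow_le_rpow (by positivity) hdist (by linarith)

lemma measurable_halfPlaneKernel (α h : ℝ) :
    Measurable fun p : ℝ × ℝ => halfPlaneKernel α h p.1 p.2 := by
  unfold halfPlaneKernel
  fun_prop

lemma integrableOn_halfPlaneKernel_Ioi {a w : ℝ} (hα : 0 < α) (ha : 0 ≤ a)
    (hsub : 0 < a ^ 2 + (w - h) ^ 2) (hadd : 0 < a ^ 2 + (w + h) ^ 2) :
    IntegrableOn (fun u => halfPlaneKernel α h u w) (Ioi a) :=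
  (integrableOn_div_sq_add_rpow_Ioi hα ha hsub).sub (integrableOn_div_sq_add_rpow_Ioi hα ha hadd)

lemma integral_halfPlaneKernel_Ioi {a w : ℝ} (hα : 0 < α) (ha : 0 ≤ a)
    (hsub : 0 < a ^ 2 + (w - h) ^ 2) (hadd : 0 < a ^ 2 + (w + h) ^ 2) :
    ∫ u in Ioi a, halfPlaneKernel α h u w =
      ((a ^ 2 + (w - h) ^ 2) ^ (-α) - (a ^ 2 + (w + h) ^ 2) ^ (-α)) / (2 * α) := by
  unfold halfPlaneKernel
  rw [integral_sub (integrableOn_div_sq_add_rpow_Ioi hα ha hsub)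
      (integrableOn_div_sq_add_rpow_Ioi hα ha hadd),
    integral_div_sq_add_rpow_Ioi hα ha hsub, integral_div_sq_add_rpow_Ioi hα ha hadd, sub_div]

lemma integrableOn_halfPlaneKernel (hα₀ : 0 < α) (hα₁ : α < 1 / 2) (hh : 0 ≤ h) :
    IntegrableOn (fun p : ℝ × ℝ => halfPlaneKernel α h p.1 p.2) (Ioi 0 ×ˢ Ioi 0) := by
  rw [IntegrableOn, Measure.volume_eq_prod, ← Measure.prod_restrict,
    integrable_prod_iff' (measurable_halfPlaneKernel α h).aestronglyMeasurable]
  have hae : ∀ᵐ w ∂(volume.restrict (Ioi (0 : ℝ))), w ≠ h ∧ 0 < w :=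
    (ae_restrict_of_ae (Measure.ae_ne volume h)).and (ae_restrict_mem measurableSet_Ioi)
  have hpos : ∀ {w : ℝ}, w ≠ h → 0 < w → 0 < 0 ^ 2 + (w - h) ^ 2 ∧ 0 < 0 ^ 2 + (w + h) ^ 2 := by
    intro w hne hw
    exact ⟨by simpa [sq_pos_iff, sub_eq_zero] using hne, by positivity⟩
  constructor
  · filter_upwards [hae] with w ⟨hne, hw⟩
    exact integrableOn_halfPlaneKernel_Ioi hα₀ le_rfl (hpos hne hw).1 (hpos hne hw).2
  · refine ((integrableOn_abs_sub_rpow_sub_abs_add_rpow (r := -(2 * α)) (by linarith)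
      (by linarith) hh).div_const (2 * α)).congr ?_
    filter_upwards [hae] with w ⟨hne, hw⟩
    have hnorm : ∫ u in Ioi 0, ‖halfPlaneKernel α h u w‖ = ∫ u in Ioi 0, halfPlaneKernel α h u w :=
      setIntegral_congr_fun measurableSet_Ioi fun u hu =>
        Real.norm_of_nonneg (halfPlaneKernel_nonneg (by linarith) hh hu hw.le)
    rw [hnorm, integral_halfPlaneKernel_Ioi hα₀ le_rfl (hpos hne hw).1 (hpos hne hw).2,
      zero_pow two_ne_zero, zero_add, zero_add, sq_rpow_neg, sq_rpow_neg]

lemma integrableOn_halfPlaneKernel_add (hα₀ : 0 < α) (hα₁ : α < 1 / 2) (hh : 0 ≤ h) (a : ℝ) :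
    IntegrableOn (fun y : ℝ × ℝ => halfPlaneKernel α h (y.1 + a) y.2) (Ioi (-a) ×ˢ Ioi 0) := by
  have hpreimage : (· + (a, 0)) ⁻¹' (Ioi 0 ×ˢ Ioi 0) = Ioi (-a) ×ˢ Ioi (0 : ℝ) := by
    ext y
    simp [neg_lt_iff_pos_add]
  rw [← hpreimage]
  simpa [Function.comp_def] using
    ((measurePreserving_add_right volume (a, (0 : ℝ))).integrableOn_comp_preimage
      (measurableEmbedding_addRight _)).2 (integrableOn_halfPlaneKernel hα₀ hα₁ hh)

lemma le_integral_halfPlaneKernel {t : ℝ} (hα₀ : 0 < α) (hα₁ : α ≤ 1) (hh : 0 ≤ h)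
    (ht : t ∈ Ioo 0 1) :
    (2 ^ (-α) * (t ^ (-(2 * α)) - (t + h) ^ (-(2 * α))) - 2 * h) / (2 * α) ≤
      ∫ s in t..1, halfPlaneKernel α h s (h + t) := by
  obtain ⟨ht₀, ht₁⟩ := ht
  rw [← intervalIntegral.integral_Ioi_sub_Ioi (integrableOn_halfPlaneKernel_Ioi hα₀ ht₀.le
      (by positivity) (by positivity)) ht₁.le,
    integral_halfPlaneKernel_Ioi hα₀ ht₀.le (by positivity) (by positivity),
    integral_halfPlaneKernel_Ioi hα₀ zero_le_one (by positivity) (by positivity), ← sub_div]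
  refine div_le_div_of_nonneg_right ?_ (by positivity)
  have hnear : (t ^ 2 + (h + t - h) ^ 2) ^ (-α) = 2 ^ (-α) * t ^ (-(2 * α)) := by
    rw [← two_mul_sq_rpow_neg ht₀.le]
    ring_nf
  have hreflected : (t ^ 2 + (h + t + h) ^ 2) ^ (-α) ≤ 2 ^ (-α) * (t + h) ^ (-(2 * α)) := by
    rw [← two_mul_sq_rpow_neg (by positivity)]
    exact Real.rpow_le_rpow_of_nonpos (by positivity) (by nlinarith [sq_nonneg h]) (by linarith)
  have hend : (1 ^ 2 + (h + t - h) ^ 2) ^ (-α) - (1 ^ 2 + (h + t + h) ^ 2) ^ (-α) ≤ 2 * h := by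
    rw [one_pow]
    linarith [one_add_sq_rpow_neg_sub_le hα₀.le hα₁ (s := h + t - h) (t := h + t + h)
      (by linarith) (by linarith)]
  rw [hnear]
  linarith

lemma integrableOn_halfPlaneKernel_Atri_zero (hα₀ : 0 < α) (hα₁ : α < 1 / 2) (hh : 0 ≤ h) :
    IntegrableOn (fun p : ℝ × ℝ => halfPlaneKernel α h p.1 (h + p.2)) (Atri 0) := by
  simpa using (integrableOn_Atri_zero_iff (0, h)).2
    ((integrableOn_halfPlaneKernel hα₀ hα₁ hh).mono_set (Atri_subset hh))

lemma le_setIntegral_halfPlaneKernel_Atri_zero (hα₀ : 0 < α) (hα₁ : α < 1 / 2) (hh : 0 ≤ h) :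
    (2 ^ (-α) * h ^ (1 - 2 * α) - 3 * h) / (2 * α) ≤
      ∫ p in Atri 0, halfPlaneKernel α h p.1 (h + p.2) := by
  have hr : -1 < -(2 * α) := by linarith
  have hker := integrableOn_halfPlaneKernel_Atri_zero hα₀ hα₁ hh
  have hdiff := (intervalIntegrable_rpow_sub_add_rpow hr 0 1 h).const_mul (2 ^ (-α))
  have hpower : h ^ (1 - 2 * α) - h ≤
      ∫ t in 0..1, (t ^ (-(2 * α)) - (t + h) ^ (-(2 * α))) := by
    simpa only [neg_add_eq_sub] using sub_le_integral_rpow_sub_add_rpow hr (by linarith) hh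
  have htwo : (2 : ℝ) ^ (-α) ≤ 1 :=
    Real.rpow_le_one_of_one_le_of_nonpos one_le_two (by linarith)
  calc (2 ^ (-α) * h ^ (1 - 2 * α) - 3 * h) / (2 * α)
      ≤ (2 ^ (-α) * (h ^ (1 - 2 * α) - h) - 2 * h) / (2 * α) := by
        refine div_le_div_of_nonneg_right ?_ (by positivity)
        nlinarith
    _ ≤ (2 ^ (-α) * (∫ t in 0..1, (t ^ (-(2 * α)) - (t + h) ^ (-(2 * α)))) - 2 * h) /
          (2 * α) := by gcongr
    _ = ∫ t in 0..1,
          (2 ^ (-α) * (t ^ (-(2 * α)) - (t + h) ^ (-(2 * α))) - 2 * h) / (2 * α) := by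
        rw [intervalIntegral.integral_div, intervalIntegral.integral_sub hdiff
          intervalIntegrable_const, intervalIntegral.integral_const_mul,
          intervalIntegral.integral_const, sub_zero, one_smul]
    _ ≤ ∫ t in 0..1, ∫ s in t..1, halfPlaneKernel α h s (h + t) :=
        intervalIntegral.integral_mono_on_of_le_Ioo zero_le_one
          ((hdiff.sub intervalIntegrable_const).div_const _)
          (intervalIntegrable_integral_of_integrableOn_Atri_zero hker)
          fun t ht => le_integral_halfPlaneKernel hα₀ (by linarith) hh ht
    _ = ∫ p in Atri 0, halfPlaneKernel α h p.1 (h + p.2) := (setIntegral_Atri_zero hker).symm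

end HalfPlaneKernel

section QuadrantKernel

variable {α : ℝ} {x : ℝ × ℝ}

lemma mem_closure_Dplus : x ∈ closure Dplus ↔ 0 ≤ x.1 ∧ 0 ≤ x.2 := by
  simp [Dplus, closure_prod_eq, -Ici_prod_Ici]

lemma Ioi_prod_Ioi_subset_Dplus (hx : x ∈ closure Dplus) : Ioi x.1 ×ˢ Ioi 0 ⊆ Dplus :=
  prod_mono_left (Ioi_subset_Ioi (mem_closure_Dplus.1 hx).1)

lemma edist2_rpow (α : ℝ) (p q : ℝ × ℝ) :
    edist2 p q ^ (2 + 2 * α) = ((p.1 - q.1) ^ 2 + (p.2 - q.2) ^ 2) ^ (1 + α) := by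
  rw [edist2, Real.sqrt_eq_rpow, ← Real.rpow_mul (by positivity)]
  congr 1
  ring

lemma K2_eq_halfPlaneKernel_add (α : ℝ) (x y : ℝ × ℝ) :
    K2 α x y = halfPlaneKernel α x.2 (y.1 - x.1) y.2 + halfPlaneKernel α x.2 (y.1 + x.1) y.2 := by
  simp only [K2, halfPlaneKernel, edist2_rpow]
  ring_nf

lemma halfPlaneKernel_le_K2 {y : ℝ × ℝ} (hα : -1 ≤ α) (hx₁ : 0 ≤ x.1) (hx₂ : 0 ≤ x.2)
    (hy : y ∈ Ioi x.1 ×ˢ Ioi (0 : ℝ)) : halfPlaneKernel α x.2 (y.1 - x.1) y.2 ≤ K2 α x y := by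
  have hy₁ : x.1 < y.1 := hy.1
  rw [K2_eq_halfPlaneKernel_add]
  exact le_add_of_nonneg_right (halfPlaneKernel_nonneg hα hx₂ (by linarith) (le_of_lt hy.2))

lemma K2_nonneg {y : ℝ × ℝ} (hα : -1 ≤ α) (hx₁ : 0 ≤ x.1) (hx₂ : 0 ≤ x.2)
    (hy : y ∈ Ioi x.1 ×ˢ Ioi (0 : ℝ)) : 0 ≤ K2 α x y :=
  (halfPlaneKernel_nonneg hα hx₂ (sub_pos.2 hy.1) (le_of_lt hy.2)).trans
    (halfPlaneKernel_le_K2 hα hx₁ hx₂ hy)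

lemma integrableOn_K2 (hα₀ : 0 < α) (hα₁ : α < 1 / 2) (hx₁ : 0 ≤ x.1) (hx₂ : 0 ≤ x.2) :
    IntegrableOn (K2 α x) (Ioi x.1 ×ˢ Ioi 0) := by
  have hleft := integrableOn_halfPlaneKernel_add hα₀ hα₁ hx₂ (-x.1)
  have hright := (integrableOn_halfPlaneKernel_add hα₀ hα₁ hx₂ x.1).mono_set
    (prod_mono_left (Ioi_subset_Ioi (by linarith : -x.1 ≤ x.1)))
  rw [neg_neg] at hleft
  refine (hleft.add hright).congr_fun (fun y _ => ?_) (measurableSet_Ioi.prod measurableSet_Ioi)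
  simp only [Pi.add_apply, K2_eq_halfPlaneKernel_add, sub_eq_add_neg]

lemma integrableOn_K2_mul {ω : ℝ × ℝ → ℝ} {C : ℝ} (hα₀ : 0 < α) (hα₁ : α < 1 / 2)
    (hx : x ∈ closure Dplus) (hω : AEStronglyMeasurable ω) (hC : ∀ y ∈ Dplus, ‖ω y‖ ≤ C) :
    IntegrableOn (fun y => K2 α x y * ω y) (Ioi x.1 ×ˢ Ioi 0) := by
  obtain ⟨hx₁, hx₂⟩ := mem_closure_Dplus.1 hx
  refine (integrableOn_K2 hα₀ hα₁ hx₁ hx₂).mul_bdd (c := C) hω.restrict ?_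
  filter_upwards [ae_restrict_mem (measurableSet_Ioi.prod measurableSet_Ioi)] with y hy
  exact hC y (Ioi_prod_Ioi_subset_Dplus hx hy)

lemma le_setIntegral_K2_mul {ω : ℝ × ℝ → ℝ} (hα₀ : 0 < α) (hα₁ : α < 1 / 2)
    (hx₁ : 0 ≤ x.1) (hx₂ : 0 ≤ x.2)
    (hKω : IntegrableOn (fun y => K2 α x y * ω y) (Ioi x.1 ×ˢ Ioi 0))
    (hω : ∀ y ∈ Ioi x.1 ×ˢ Ioi 0, (Atri x).indicator (fun _ => 1) y ≤ ω y) :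
    (2 ^ (-α) * x.2 ^ (1 - 2 * α) - 3 * x.2) / (2 * α) ≤
      ∫ y in Ioi x.1 ×ˢ Ioi 0, K2 α x y * ω y := by
  have hsub := Atri_subset hx₂
  have hnonneg : ∀ y ∈ Ioi x.1 ×ˢ Ioi 0, 0 ≤ K2 α x y * ω y := fun y hy =>
    mul_nonneg (K2_nonneg (by linarith) hx₁ hx₂ hy)
      ((indicator_nonneg (fun _ _ => zero_le_one) y).trans (hω y hy))
  have hker : IntegrableOn (fun y => halfPlaneKernel α x.2 (y.1 - x.1) y.2) (Atri x) := by
    simpa [← integrableOn_Atri_zero_iff x] using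
      integrableOn_halfPlaneKernel_Atri_zero hα₀ hα₁ hx₂
  calc (2 ^ (-α) * x.2 ^ (1 - 2 * α) - 3 * x.2) / (2 * α)
      ≤ ∫ p in Atri 0, halfPlaneKernel α x.2 p.1 (x.2 + p.2) :=
        le_setIntegral_halfPlaneKernel_Atri_zero hα₀ hα₁ hx₂
    _ = ∫ y in Atri x, halfPlaneKernel α x.2 (y.1 - x.1) y.2 := by simp [setIntegral_Atri_eq x]
    _ ≤ ∫ y in Atri x, K2 α x y * ω y := by
        refine setIntegral_mono_on hker (hKω.mono_set hsub) (measurableSet_Atri x) fun y hy => ?_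
        have hω₁ : 1 ≤ ω y := by simpa [hy] using hω y (hsub hy)
        exact (halfPlaneKernel_le_K2 (by linarith) hx₁ hx₂ (hsub hy)).trans
          (le_mul_of_one_le_right (K2_nonneg (by linarith) hx₁ hx₂ (hsub hy)) hω₁)
    _ ≤ ∫ y in Ioi x.1 ×ˢ Ioi 0, K2 α x y * ω y := by
        refine setIntegral_mono_set hKω ?_ hsub.eventuallyLE
        filter_upwards [ae_restrict_mem (measurableSet_Ioi.prod measurableSet_Ioi)] with y hy
        exact hnonneg y hy

end QuadrantKernel

lemma one_div_five_mul_eight_rpow_mul_lt {α : ℝ} (hα : 0 < α) :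
    1 / (5 * 8 ^ α * α) < 2 ^ (-α) / (2 * α) := by
  have hpow : (2 : ℝ) ^ α ≤ 8 ^ α := by gcongr; norm_num
  rw [Real.rpow_neg zero_le_two, inv_eq_one_div, div_div]
  refine one_div_lt_one_div_of_lt (by positivity) ?_
  have hprod : 0 < (2 : ℝ) ^ α * α := by positivity
  nlinarith

theorem stmt6_general {α c : ℝ} (hα : α ∈ Ioo (0 : ℝ) (1 / 2)) (hc : c < 2 ^ (-α) / (2 * α)) :
    ∃ δ ∈ Ioo (0 : ℝ) 1, ∀ x ∈ closure Dplus, x.2 ≤ δ → ∀ ω : ℝ × ℝ → ℝ,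
      IntegrableOn (fun y => K2 α x y * ω y) (Ioi x.1 ×ˢ Ioi 0) →
      (∀ y ∈ Dplus, (Atri x).indicator (fun _ => 1) y ≤ ω y) →
      c * x.2 ^ (1 - 2 * α) ≤ ∫ y in Ioi x.1 ×ˢ Ioi 0, K2 α x y * ω y := by
  obtain ⟨hα₀, hα₁⟩ := hα
  have hgap : 0 < (2 ^ (-α) - c * (2 * α)) / 3 := by
    rw [lt_div_iff₀ (by positivity)] at hc
    linarith
  obtain ⟨δ, hδ, hsmall⟩ := exists_forall_Icc_rpow_le (p := 2 * α) (by positivity) hgap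
  refine ⟨δ, hδ, fun x hx hxδ ω hKω hω => ?_⟩
  obtain ⟨hx₁, hx₂⟩ := mem_closure_Dplus.1 hx
  refine le_trans ?_ (le_setIntegral_K2_mul hα₀ hα₁ hx₁ hx₂ hKω
    fun y hy => hω y (Ioi_prod_Ioi_subset_Dplus hx hy))
  have hsplit : x.2 = x.2 ^ (1 - 2 * α) * x.2 ^ (2 * α) := by
    rw [← Real.rpow_add' hx₂ (by simp), sub_add_cancel, Real.rpow_one]
  have herror : x.2 ≤ x.2 ^ (1 - 2 * α) * ((2 ^ (-α) - c * (2 * α)) / 3) := by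
    conv_lhs => rw [hsplit]
    gcongr
    exact hsmall x.2 ⟨hx₂, hxδ⟩
  rw [le_div_iff₀ (by positivity)]
  linarith

/-- For `α ∈ (0,1/2)` there is `δ ∈ (0,1)`, depending only on `α`, such that
for every `x` in the closure of `D⁺` with `x₂ ≤ δ` and every measurable `ω`, odd in `x₁`,
with `χ_{A(x)} ≤ ω ≤ 1` on `D⁺`:
`∫_{(x₁,∞)×(0,∞)} K2(x,y) ω(y) dy ≥ (1/(5·8^α·α))·x₂^{1-2α}`. -/
theorem stmt6 (α : ℝ) (hα : α ∈ Set.Ioo (0 : ℝ) (1/2)) :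
    ∃ δ ∈ Set.Ioo (0 : ℝ) 1,
      ∀ x : ℝ × ℝ, x ∈ closure Dplus → x.2 ≤ δ →
      ∀ ω : ℝ × ℝ → ℝ, Measurable ω →
        (∀ y : ℝ × ℝ, 0 < y.2 → ω (-y.1, y.2) = -ω (y.1, y.2)) →
        (∀ y ∈ Dplus, (Atri x).indicator (fun _ => (1 : ℝ)) y ≤ ω y ∧ ω y ≤ 1) →
        ∫ y in Set.Ioi x.1 ×ˢ Set.Ioi (0 : ℝ), K2 α x y * ω y ≥
          1 / (5 * 8 ^ α * α) * x.2 ^ (1 - 2 * α) := by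
  obtain ⟨δ, hδ, hbound⟩ := stmt6_general hα (one_div_five_mul_eight_rpow_mul_lt hα.1)
  refine ⟨δ, hδ, fun x hx hxδ ω hω _ hωb => hbound x hx hxδ ω ?_ fun y hy => (hωb y hy).1⟩
  exact integrableOn_K2_mul hα.1 hα.2 hx hω.aestronglyMeasurable fun y hy =>
    (Real.norm_of_nonneg ((indicator_nonneg (fun _ _ => zero_le_one) y).trans
      (hωb y hy).1)).trans_le (hωb y hy).2
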